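/- arXiv:2108.13675 — 7 statements merged into one kernel-verified Lean document; each statement's English description precedes it below -/
import Mathlib

section
/- Let d = 2, x̄ = (x̄₁, x̄₂) ∈ ℝ² with x̄₁ > 0, and let x = (x₁, x₂) ∈ ℝ² with x ≠ x̄. Let N be the number of times t > 0 for which there exists ξ̄ ∈ ℝ² with ½|ξ̄|² = x̄₁ and x̄ + t ξ̄ + (t²/2)e₁ = x. Then: N = 2 if x₁ > (x₂ − x̄₂)²/(4x̄₁) (x strictly above the caustic Γ), N = 1 if x₁ = (x₂ − x̄₂)²/(4x̄₁) (x on Γ), and N = 0 if x₁ < (x₂ − x̄₂)²/(4x̄₁) (x strictly below Γ). -/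
/-!
Eliminating the covector, `ξ̄ = ((x₁ - x̄₁ - t²/2)/t, (x₂ - x̄₂)/t)`, the energy condition becomes
`(t² - 2c)² = 4D` with `c = x₁ + x̄₁` and `D = 4 x̄₁ x₁ - (x₂ - x̄₂)²`
(`exists_covector_iff`). The sign of `D` says on which side of the caustic `x` lies. If `D < 0`
there is no solution. If `D ≥ 0`, then `x₁ ≥ 0`, so `c > 0`, and
`c² - D = |x - x̄|² > 0` gives `√D < c`; hence both roots `t² = 2(c ± √D)` are positive, and they
coincide exactly when `D = 0`.
-/

/-- An energy-zero ray reaching `x` at time `t > 0` exists exactly when `t²` solves a quadratic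
equation whose discriminant is, up to a constant, the defining function of the caustic. -/
lemma exists_covector_iff (a b x₁ x₂ t : ℝ) (ht : 0 < t) :
    (∃ ξ₁ ξ₂ : ℝ, (ξ₁ ^ 2 + ξ₂ ^ 2) / 2 = a ∧
      a + t * ξ₁ + t ^ 2 / 2 = x₁ ∧ b + t * ξ₂ = x₂) ↔
    (t ^ 2 - 2 * (x₁ + a)) ^ 2 = 4 * (4 * a * x₁ - (x₂ - b) ^ 2) := by
  constructor
  · rintro ⟨ξ₁, ξ₂, rfl, rfl, rfl⟩
    ring
  · intro h
    refine ⟨(x₁ - a - t ^ 2 / 2) / t, (x₂ - b) / t, ?_, ?_, ?_⟩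
    · field_simp
      linarith
    · field_simp
      ring
    · field_simp
      ring

/-- For `0 ≤ r < c`, the positive solutions of `(t² - 2c)² = 4r²` are `√(2(c ± r))`. -/
lemma setOf_quartic_eq_pair (c r : ℝ) (hr : 0 ≤ r) (hrc : r < c) :
    {t : ℝ | 0 < t ∧ (t ^ 2 - 2 * c) ^ 2 = 4 * r ^ 2} = {√(2 * (c - r)), √(2 * (c + r))} := by
  have hm : 0 < 2 * (c - r) := by linarith
  have hp : 0 < 2 * (c + r) := by linarith
  ext t
  simp only [Set.mem_ofPred_eq, Set.mem_insert_iff, Set.mem_singleton_iff]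
  constructor
  · rintro ⟨ht, h⟩
    have hfac : (t ^ 2 - 2 * (c - r)) * (t ^ 2 - 2 * (c + r)) = 0 := by linarith
    rcases mul_eq_zero.mp hfac with h | h
    · left
      rw [← sub_eq_zero.mp h, Real.sqrt_sq ht.le]
    · right
      rw [← sub_eq_zero.mp h, Real.sqrt_sq ht.le]
  · rintro (rfl | rfl)
    · refine ⟨Real.sqrt_pos.mpr hm, ?_⟩
      rw [Real.sq_sqrt hm.le]
      ring
    · refine ⟨Real.sqrt_pos.mpr hp, ?_⟩
      rw [Real.sq_sqrt hp.le]
      ring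

/-- Proposition 2.1(iii): for `d = 2`, `x̄₁ > 0` and `x ≠ x̄`, the number `N` of times
`t > 0` at which some Hamiltonian trajectory of the toy-model Hamiltonian on the energy
level `0` issued from `x̄` reaches `x` is: `2` if `x` is strictly above the caustic
`Γ = {x : x₁ = (x₂ − x̄₂)²/(4x̄₁)}`, `1` if `x ∈ Γ`, and `0` if `x` is strictly below `Γ`. -/
theorem toy_model_ray_count (xbar₁ xbar₂ x₁ x₂ : ℝ)
    (hx : 0 < xbar₁) (hne : (x₁, x₂) ≠ (xbar₁, xbar₂))
    (T : Set ℝ)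
    (hT : T = {t : ℝ | 0 < t ∧ ∃ ξ₁ ξ₂ : ℝ, (ξ₁ ^ 2 + ξ₂ ^ 2) / 2 = xbar₁ ∧
      xbar₁ + t * ξ₁ + t ^ 2 / 2 = x₁ ∧ xbar₂ + t * ξ₂ = x₂}) :
    (x₁ > (x₂ - xbar₂) ^ 2 / (4 * xbar₁) → T.ncard = 2) ∧
    (x₁ = (x₂ - xbar₂) ^ 2 / (4 * xbar₁) → T.ncard = 1) ∧
    (x₁ < (x₂ - xbar₂) ^ 2 / (4 * xbar₁) → T.ncard = 0) := by
  set D := 4 * xbar₁ * x₁ - (x₂ - xbar₂) ^ 2 with hD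
  have hT' : T = {t : ℝ | 0 < t ∧ (t ^ 2 - 2 * (x₁ + xbar₁)) ^ 2 = 4 * D} := by
    rw [hT]
    ext t
    exact and_congr_right fun ht => exists_covector_iff xbar₁ xbar₂ x₁ x₂ t ht
  have h4 : 0 < 4 * xbar₁ := by linarith
  have hdist : 0 < (x₁ - xbar₁) ^ 2 + (x₂ - xbar₂) ^ 2 := by
    by_contra! h
    refine hne (Prod.ext ?_ ?_)
    · show x₁ = xbar₁
      nlinarith [sq_nonneg (x₁ - xbar₁), sq_nonneg (x₂ - xbar₂)]
    · show x₂ = xbar₂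
      nlinarith [sq_nonneg (x₁ - xbar₁), sq_nonneg (x₂ - xbar₂)]
  have hlt : 0 ≤ D → √D < x₁ + xbar₁ := by
    intro h
    have hx₁ : 0 ≤ x₁ := by
      by_contra! hneg
      nlinarith [mul_pos hx (neg_pos.mpr hneg), sq_nonneg (x₂ - xbar₂)]
    rw [Real.sqrt_lt' (by linarith)]
    linarith
  have hpair : 0 ≤ D →
      T = {√(2 * (x₁ + xbar₁ - √D)), √(2 * (x₁ + xbar₁ + √D))} := by
    intro h
    rw [← setOf_quartic_eq_pair _ _ (Real.sqrt_nonneg D) (hlt h), Real.sq_sqrt h, hT']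
  refine ⟨fun h => ?_, fun h => ?_, fun h => ?_⟩
  · rw [gt_iff_lt, div_lt_iff₀ h4] at h
    have hpos : 0 < D := by linarith
    rw [hpair hpos.le]
    refine Set.ncard_pair (ne_of_lt (Real.sqrt_lt_sqrt ?_ ?_))
    · linarith [hlt hpos.le]
    · linarith [Real.sqrt_pos.mpr hpos]
  · rw [eq_div_iff h4.ne'] at h
    have hzero : D = 0 := by linarith
    rw [hpair hzero.ge, hzero]
    simp
  · rw [lt_div_iff₀ h4] at h
    have hneg : D < 0 := by linarith
    have hempty : T = ∅ := by
      rw [hT', Set.eq_empty_iff_forall_notMem]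
      rintro t ⟨-, ht⟩
      linarith [sq_nonneg (t ^ 2 - 2 * (x₁ + xbar₁))]
    rw [hempty, Set.ncard_empty]
end

section
/- Let d = 2, x̄ = (x̄₁, x̄₂) ∈ ℝ² with x̄₁ > 0, and let x = (x₁, x₂) ∈ ℝ² with x ≠ x̄ and D := 4x₁x̄₁ − (x₂ − x̄₂)² ≥ 0. Then the set of times t > 0 at which a Hamiltonian trajectory on the energy level 0 issued from x̄ reaches x, i.e. {t > 0 : ∃ ξ̄ ∈ ℝ², ½|ξ̄|² = x̄₁ and x̄ + t ξ̄ + (t²/2)e₁ = x}, equals { √(2(x₁ + x̄₁) + 2√D), √(2(x₁ + x̄₁) − 2√D) } (a two-element set when D > 0, a single time when D = 0). -/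
/-!
For `t > 0` the two position equations determine `ξ₁ = (x₁ - xbar₁ - t² / 2) / t` and
`ξ₂ = (x₂ - xbar₂) / t`. Substituting these into the energy condition and clearing
denominators gives a quadratic equation in `s = t²`,
`s² - 4 (x₁ + xbar₁) s + 4 ((x₁ - xbar₁)² + (x₂ - xbar₂)²) = 0`,
whose reduced discriminant is `4 D`, so that `s = 2 (x₁ + xbar₁) ± 2 √D`. Both roots are
positive: `D ≥ 0` forces `x₁ ≥ 0`, so their sum is positive, and their product is
`4 |x - xbar|²`, which is positive because `x ≠ xbar`.
-/

/-- A momentum on the energy level carrying `(a, b)` to `(x, y)` in time `t` exists exactly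
when `t ^ 2` solves the quadratic obtained by eliminating the momentum. -/
lemma exists_momentum_iff (a b x y t : ℝ) (ht : 0 < t) :
    (∃ ξ₁ ξ₂ : ℝ, (ξ₁ ^ 2 + ξ₂ ^ 2) / 2 = a ∧
        a + t * ξ₁ + t ^ 2 / 2 = x ∧ b + t * ξ₂ = y) ↔
      (t ^ 2 - 2 * (x + a)) ^ 2 = 4 * (4 * x * a - (y - b) ^ 2) := by
  constructor
  · rintro ⟨ξ₁, ξ₂, hE, rfl, rfl⟩
    linear_combination 8 * t ^ 2 * hE
  · intro h
    refine ⟨(x - a - t ^ 2 / 2) / t, (y - b) / t, ?_, ?_, ?_⟩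
    · field_simp
      linear_combination h
    · field_simp
      ring
    · field_simp
      ring

/-- The explicit reaching times underlying Proposition 2.1(iii) and Remark 2.2:
for `d = 2`, `x̄₁ > 0`, `x ≠ x̄` and `D = 4x₁x̄₁ − (x₂ − x̄₂)² ≥ 0`, the set of times
`t > 0` at which a Hamiltonian trajectory of the toy-model Hamiltonian on the energy
level `0` issued from `x̄` reaches `x` equals
`{√(2(x₁ + x̄₁) + 2√D), √(2(x₁ + x̄₁) − 2√D)}`. -/
theorem toy_model_reaching_times (xbar₁ xbar₂ x₁ x₂ : ℝ)
    (hx : 0 < xbar₁) (hne : (x₁, x₂) ≠ (xbar₁, xbar₂))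
    (hD : 0 ≤ 4 * x₁ * xbar₁ - (x₂ - xbar₂) ^ 2) :
    {t : ℝ | 0 < t ∧ ∃ ξ₁ ξ₂ : ℝ, (ξ₁ ^ 2 + ξ₂ ^ 2) / 2 = xbar₁ ∧
        xbar₁ + t * ξ₁ + t ^ 2 / 2 = x₁ ∧ xbar₂ + t * ξ₂ = x₂}
      = {Real.sqrt (2 * (x₁ + xbar₁) + 2 * Real.sqrt (4 * x₁ * xbar₁ - (x₂ - xbar₂) ^ 2)),
         Real.sqrt (2 * (x₁ + xbar₁) - 2 * Real.sqrt (4 * x₁ * xbar₁ - (x₂ - xbar₂) ^ 2))} := by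
  set D := 4 * x₁ * xbar₁ - (x₂ - xbar₂) ^ 2 with hDdef
  have hr : √D ^ 2 = D := Real.sq_sqrt hD
  have hr0 : 0 ≤ √D := Real.sqrt_nonneg D
  have hx₁ : 0 ≤ x₁ := by
    by_contra! h
    nlinarith [mul_neg_of_neg_of_pos h hx, sq_nonneg (x₂ - xbar₂)]
  have hdist : 0 < (x₁ - xbar₁) ^ 2 + (x₂ - xbar₂) ^ 2 := by
    by_contra! h
    have h₁ : x₁ - xbar₁ = 0 := by nlinarith [sq_nonneg (x₁ - xbar₁), sq_nonneg (x₂ - xbar₂)]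
    have h₂ : x₂ - xbar₂ = 0 := by nlinarith [sq_nonneg (x₁ - xbar₁), sq_nonneg (x₂ - xbar₂)]
    exact hne (Prod.ext (sub_eq_zero.mp h₁) (sub_eq_zero.mp h₂))
  -- `(x₁ + xbar₁)² - D` is the squared distance from `x` to `xbar`.
  have hlt : √D < x₁ + xbar₁ := by
    apply lt_of_pow_lt_pow_left₀ 2 (by linarith)
    rw [hr]
    linarith
  have hp : 0 < 2 * (x₁ + xbar₁) + 2 * √D := by linarith
  have hm : 0 < 2 * (x₁ + xbar₁) - 2 * √D := by linarith
  ext t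
  simp only [Set.mem_ofPred_eq, Set.mem_insert_iff, Set.mem_singleton_iff]
  constructor
  · rintro ⟨ht, h⟩
    rw [exists_momentum_iff _ _ _ _ _ ht, ← hDdef] at h
    have hsq : (t ^ 2 - 2 * (x₁ + xbar₁)) ^ 2 = (2 * √D) ^ 2 := by
      rw [h, mul_pow, hr]
      norm_num
    rcases sq_eq_sq_iff_eq_or_eq_neg.mp hsq with h | h
    · left
      rw [show 2 * (x₁ + xbar₁) + 2 * √D = t ^ 2 by linarith, Real.sqrt_sq ht.le]
    · right
      rw [show 2 * (x₁ + xbar₁) - 2 * √D = t ^ 2 by linarith, Real.sqrt_sq ht.le]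
  · rintro (rfl | rfl)
    · refine ⟨Real.sqrt_pos.mpr hp, ?_⟩
      rw [exists_momentum_iff _ _ _ _ _ (Real.sqrt_pos.mpr hp), Real.sq_sqrt hp.le, ← hDdef]
      linear_combination 4 * hr
    · refine ⟨Real.sqrt_pos.mpr hm, ?_⟩
      rw [exists_momentum_iff _ _ _ _ _ (Real.sqrt_pos.mpr hm), Real.sq_sqrt hm.le, ← hDdef]
      linear_combination 4 * hr
end

section
/- Let d = 2, x̄ = (x̄₁, x̄₂) ∈ ℝ² with x̄₁ > 0, and ξ̄ = (ξ̄₁, ξ̄₂) ∈ ℝ² with ξ̄₁² + ξ̄₂² = 2x̄₁. Along the Hamiltonian trajectory x(t) = x̄ + t ξ̄ + (t²/2)e₁: (i) x₁(t) ≥ ξ̄₂²/2 for all t, with equality exactly at t = −ξ̄₁ (the vertex of the trajectory parabola); (ii) the vertex lies on the ellipse L = {x : (2x₁ − x̄₁)² + (x₂ − x̄₂)² = x̄₁²}, i.e. (2x₁(−ξ̄₁) − x̄₁)² + (x₂(−ξ̄₁) − x̄₂)² = x̄₁². -/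
/-!
On the energy level `0`, completing the square gives `x₁(t) = ξ̄₂²/2 + (t + ξ̄₁)²/2`, which yields
the minimum and its unique minimizer `t = -ξ̄₁`. The vertex is therefore
`(ξ̄₂²/2, x̄₂ - ξ̄₁ξ̄₂)`, and since `x̄₁ = (ξ̄₁² + ξ̄₂²)/2` the ellipse equation is the identity
`((ξ̄₂² - ξ̄₁²)/2)² + (ξ̄₁ξ̄₂)² = ((ξ̄₁² + ξ̄₂²)/2)²`.
-/

/-- Proposition 2.1(iv), first claim: for `d = 2` and a trajectory
`x(t) = x̄ + tξ̄ + (t²/2)e₁` of the toy-model Hamiltonian on the energy level `0`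
(i.e. `ξ̄₁² + ξ̄₂² = 2x̄₁`): (i) `x₁(t) ≥ ξ̄₂²/2` with equality exactly at `t = −ξ̄₁`
(the vertex of the trajectory parabola); (ii) the vertex lies on the ellipse
`L = {x : (2x₁ − x̄₁)² + (x₂ − x̄₂)² = x̄₁²}`. -/
theorem toy_model_vertex_on_ellipse (xbar₁ xbar₂ ξbar₁ ξbar₂ : ℝ)
    (hx : 0 < xbar₁) (hE : ξbar₁ ^ 2 + ξbar₂ ^ 2 = 2 * xbar₁) :
    (∀ t : ℝ, ξbar₂ ^ 2 / 2 ≤ xbar₁ + t * ξbar₁ + t ^ 2 / 2 ∧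
      (xbar₁ + t * ξbar₁ + t ^ 2 / 2 = ξbar₂ ^ 2 / 2 ↔ t = -ξbar₁)) ∧
    (2 * (xbar₁ + (-ξbar₁) * ξbar₁ + (-ξbar₁) ^ 2 / 2) - xbar₁) ^ 2
        + ((xbar₂ + (-ξbar₁) * ξbar₂) - xbar₂) ^ 2 = xbar₁ ^ 2 := by
  -- Completing the square, using the energy condition to eliminate `xbar₁`.
  have key : ∀ t : ℝ, xbar₁ + t * ξbar₁ + t ^ 2 / 2 = ξbar₂ ^ 2 / 2 + (t + ξbar₁) ^ 2 / 2 := by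
    intro t
    linear_combination (-1 / 2) * hE
  refine ⟨fun t => ⟨?_, ?_, ?_⟩, ?_⟩
  · rw [key t]
    linarith [sq_nonneg (t + ξbar₁)]
  · intro h
    rw [key t] at h
    have h0 : (t + ξbar₁) ^ 2 = 0 := by linarith
    linarith [pow_eq_zero_iff (two_ne_zero) |>.mp h0]
  · rintro rfl
    rw [key]
    ring
  · obtain rfl : xbar₁ = (ξbar₁ ^ 2 + ξbar₂ ^ 2) / 2 := by linarith
    ring
end

section
/- Let d = 2 and fix x₁, y₁, τ, z₂ ∈ ℝ with x₁ + τ > 0, y₁ + τ > 0 and (x₁ − y₁, z₂) ≠ (0, 0). Define Φ : ℝ³ → ℝ by Φ(ξ₁, η₁, ξ₂) = x₁ξ₁ − y₁η₁ + z₂ξ₂ + (τ − ξ₂²/2)(ξ₁ − η₁) − (ξ₁³ − η₁³)/6. If 4(x₁ + τ)(y₁ + τ) > z₂², then Φ has exactly four critical points in ℝ³; if 4(x₁ + τ)(y₁ + τ) < z₂², then Φ has no critical points in ℝ³. -/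
/-!
The gradient of `Φ` at `(a, b, t)` vanishes iff `a² + t² = 2X`, `b² + t² = 2Y` and `t (a - b) = z`,
where `X = x₁ + τ` and `Y = y₁ + τ`. Put `v = a - b`. Then `(a + b) v = 2 (X - Y)` and `t v = z`, so
`v = 0` is excluded by `(x₁ - y₁, z) ≠ (0, 0)`, and the point is determined by `v`. The remaining
equation becomes a quadratic in `v²`,
`(v²)² - 4 (X + Y) v² + 4 ((X - Y)² + z²) = 0`,
whose reduced discriminant is `4 (4 X Y - z²)`. If this is negative there is no real solution. If
it is positive, both roots are positive (positive sum and product), and each gives two values of `v`.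
-/

/-- Criticality for the phase amounts to the vanishing of its three partial derivatives. -/
lemma phase_hasFDerivAt_zero_iff (x y τ z a b t : ℝ) :
    HasFDerivAt (fun p : ℝ × ℝ × ℝ => x * p.1 - y * p.2.1 + z * p.2.2
      + (τ - p.2.2 ^ 2 / 2) * (p.1 - p.2.1) - (p.1 ^ 3 - p.2.1 ^ 3) / 6)
      (0 : (ℝ × ℝ × ℝ) →L[ℝ] ℝ) (a, b, t) ↔
    a ^ 2 + t ^ 2 = 2 * (x + τ) ∧ b ^ 2 + t ^ 2 = 2 * (y + τ) ∧ t * (a - b) = z := by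
  have h1 : HasFDerivAt (fun p : ℝ × ℝ × ℝ => p.1) (ContinuousLinearMap.fst ℝ ℝ (ℝ × ℝ))
      (a, b, t) := hasFDerivAt_fst
  have h2 : HasFDerivAt (fun p : ℝ × ℝ × ℝ => p.2.1)
      ((ContinuousLinearMap.fst ℝ ℝ ℝ).comp (ContinuousLinearMap.snd ℝ ℝ (ℝ × ℝ)))
      (a, b, t) := hasFDerivAt_snd.fst
  have h3 : HasFDerivAt (fun p : ℝ × ℝ × ℝ => p.2.2)
      ((ContinuousLinearMap.snd ℝ ℝ ℝ).comp (ContinuousLinearMap.snd ℝ ℝ (ℝ × ℝ)))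
      (a, b, t) := hasFDerivAt_snd.snd
  have h := ((((h1.const_mul x).sub (h2.const_mul y)).add (h3.const_mul z)).add
    ((((h3.pow 2).mul_const (1 / 2)).const_sub τ).mul (h1.sub h2))).sub
    (((h1.pow 3).sub (h2.pow 3)).mul_const (1 / 6))
  have hd := h.congr_of_eventuallyEq (f₁ := fun p : ℝ × ℝ × ℝ => x * p.1 - y * p.2.1 + z * p.2.2
      + (τ - p.2.2 ^ 2 / 2) * (p.1 - p.2.1) - (p.1 ^ 3 - p.2.1 ^ 3) / 6)
    (Filter.Eventually.of_forall fun p => by simp; ring)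
  constructor
  · intro h0
    have he := h0.unique hd
    have e1 := congrArg (fun L : (ℝ × ℝ × ℝ) →L[ℝ] ℝ => L (1, 0, 0)) he
    have e2 := congrArg (fun L : (ℝ × ℝ × ℝ) →L[ℝ] ℝ => L (0, 1, 0)) he
    have e3 := congrArg (fun L : (ℝ × ℝ × ℝ) →L[ℝ] ℝ => L (0, 0, 1)) he
    simp at e1 e2 e3
    refine ⟨?_, ?_, ?_⟩ <;> linarith
  · rintro ⟨e1, e2, e3⟩
    refine hd.congr_fderiv ?_
    refine ContinuousLinearMap.ext fun p => ?_
    simp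
    linear_combination (-p.1 / 2) * e1 + p.2.1 / 2 * e2 - p.2.2 * e3

/-- The critical equations, solved in terms of the root `v = a - b` of a biquadratic. -/
lemma critical_system_iff (X Y z : ℝ) (hne : 0 < (X - Y) ^ 2 + z ^ 2) (a b t : ℝ) :
    (a ^ 2 + t ^ 2 = 2 * X ∧ b ^ 2 + t ^ 2 = 2 * Y ∧ t * (a - b) = z) ↔
    ∃ v : ℝ, (v ^ 2 - 2 * (X + Y)) ^ 2 = 4 * (4 * X * Y - z ^ 2) ∧
      ((X - Y) / v + v / 2, (X - Y) / v - v / 2, z / v) = (a, b, t) := by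
  constructor
  · rintro ⟨e1, e2, e3⟩
    have huv : (a + b) * (a - b) = 2 * (X - Y) := by linear_combination e1 - e2
    have hv : a - b ≠ 0 := by
      intro h0
      rw [h0] at e3 huv
      have hz : z = 0 := by linarith
      have hD : X - Y = 0 := by linarith
      rw [hz, hD] at hne
      norm_num at hne
    refine ⟨a - b, ?_, ?_⟩
    · have hX : X = (a ^ 2 + t ^ 2) / 2 := by linarith
      have hY : Y = (b ^ 2 + t ^ 2) / 2 := by linarith
      rw [← e3, hX, hY]
      ring
    · have hD : X - Y = (a + b) / 2 * (a - b) := by linarith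
      rw [hD, ← e3, mul_div_cancel_right₀ _ hv, mul_div_cancel_right₀ _ hv]
      ext <;> simp <;> ring
  · rintro ⟨v, hv, he⟩
    have hv0 : v ≠ 0 := by
      rintro rfl
      nlinarith
    simp only [Prod.mk.injEq] at he
    obtain ⟨rfl, rfl, rfl⟩ := he
    refine ⟨?_, ?_, ?_⟩
    · field_simp
      linear_combination hv
    · field_simp
      linear_combination hv
    · field_simp
      ring

/-- A biquadratic `(v² - s)² = r²` with `0 < r < s` has exactly four real roots. -/
lemma ncard_biquadratic_roots (s r : ℝ) (hr : 0 < r) (hrs : r < s) :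
    {v : ℝ | (v ^ 2 - s) ^ 2 = r ^ 2}.ncard = 4 := by
  obtain ⟨p, hp, hp2⟩ : ∃ p : ℝ, 0 < p ∧ p ^ 2 = s - r :=
    ⟨√(s - r), Real.sqrt_pos.2 (by linarith), Real.sq_sqrt (by linarith)⟩
  obtain ⟨q, hq, hq2⟩ : ∃ q : ℝ, 0 < q ∧ q ^ 2 = s + r :=
    ⟨√(s + r), Real.sqrt_pos.2 (by linarith), Real.sq_sqrt (by linarith)⟩
  have hpq : p < q := by nlinarith
  have hset : {v : ℝ | (v ^ 2 - s) ^ 2 = r ^ 2} = (({p, -p, q, -q} : Finset ℝ) : Set ℝ) := by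
    ext v
    simp only [Set.mem_ofPred_eq, Finset.coe_insert, Finset.coe_singleton, Set.mem_insert_iff,
      Set.mem_singleton_iff]
    have h1 : v ^ 2 - s = -r ↔ v ^ 2 = p ^ 2 := by
      rw [hp2]; constructor <;> intro h <;> linarith
    have h2 : v ^ 2 - s = r ↔ v ^ 2 = q ^ 2 := by
      rw [hq2]; constructor <;> intro h <;> linarith
    rw [sq_eq_sq_iff_eq_or_eq_neg, h1, h2, sq_eq_sq_iff_eq_or_eq_neg, sq_eq_sq_iff_eq_or_eq_neg]
    tauto
  rw [hset, Set.ncard_coe_finset, Finset.card_insert_of_notMem, Finset.card_insert_of_notMem,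
    Finset.card_insert_of_notMem, Finset.card_singleton]
  · simp only [Finset.mem_singleton]
    intro h; linarith
  · simp only [Finset.mem_insert, Finset.mem_singleton, not_or]
    constructor <;> intro h <;> linarith
  · simp only [Finset.mem_insert, Finset.mem_singleton, not_or]
    refine ⟨?_, ?_, ?_⟩ <;> intro h <;> linarith


/-- Stationary-point count from Section 2.2: for `d = 2`, with `x₁ + τ > 0`, `y₁ + τ > 0`
and `(x₁ − y₁, z₂) ≠ (0,0)`, the phase
`Φ(ξ₁, η₁, ξ₂) = x₁ξ₁ − y₁η₁ + z₂ξ₂ + (τ − ξ₂²/2)(ξ₁ − η₁) − (ξ₁³ − η₁³)/6`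
has exactly four critical points in ℝ³ in the regular zone `4(x₁+τ)(y₁+τ) > z₂²`,
and none in the shadow zone `4(x₁+τ)(y₁+τ) < z₂²`. -/
theorem toy_model_phase_critical_point_count (x₁ y₁ τ z₂ : ℝ)
    (hx : 0 < x₁ + τ) (hy : 0 < y₁ + τ) (hne : (x₁ - y₁, z₂) ≠ (0, 0))
    (Φ : ℝ × ℝ × ℝ → ℝ)
    (hΦ : Φ = fun p => x₁ * p.1 - y₁ * p.2.1 + z₂ * p.2.2
      + (τ - p.2.2 ^ 2 / 2) * (p.1 - p.2.1) - (p.1 ^ 3 - p.2.1 ^ 3) / 6) :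
    (4 * (x₁ + τ) * (y₁ + τ) > z₂ ^ 2 →
      {p : ℝ × ℝ × ℝ | HasFDerivAt Φ (0 : (ℝ × ℝ × ℝ) →L[ℝ] ℝ) p}.ncard = 4) ∧
    (4 * (x₁ + τ) * (y₁ + τ) < z₂ ^ 2 →
      {p : ℝ × ℝ × ℝ | HasFDerivAt Φ (0 : (ℝ × ℝ × ℝ) →L[ℝ] ℝ) p} = ∅) := by
  have hpos : 0 < ((x₁ + τ) - (y₁ + τ)) ^ 2 + z₂ ^ 2 := by
    by_contra hcon
    apply hne
    have hD : x₁ - y₁ = 0 := by nlinarith [sq_nonneg (x₁ - y₁), sq_nonneg z₂]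
    have hz : z₂ = 0 := by nlinarith [sq_nonneg (x₁ - y₁), sq_nonneg z₂]
    rw [hD, hz]
  have hset : {p : ℝ × ℝ × ℝ | HasFDerivAt Φ (0 : (ℝ × ℝ × ℝ) →L[ℝ] ℝ) p} =
      Set.image (fun v : ℝ => (((x₁ + τ) - (y₁ + τ)) / v + v / 2, ((x₁ + τ) - (y₁ + τ)) / v - v / 2,
        z₂ / v)) {v : ℝ | (v ^ 2 - 2 * ((x₁ + τ) + (y₁ + τ))) ^ 2 =
          4 * (4 * (x₁ + τ) * (y₁ + τ) - z₂ ^ 2)} := by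
    ext ⟨a, b, t⟩
    rw [Set.mem_ofPred_eq, hΦ, phase_hasFDerivAt_zero_iff, critical_system_iff _ _ _ hpos]
    rfl
  rw [hset]
  constructor
  · intro hreg
    -- The difference of the first two coordinates recovers `v`.
    rw [Set.ncard_image_of_injective _ fun v w hvw => by
      simp only [Prod.mk.injEq] at hvw
      linarith [hvw.1, hvw.2.1]]
    have hR : 0 < 4 * (4 * (x₁ + τ) * (y₁ + τ) - z₂ ^ 2) := by linarith
    have hlt : √(4 * (4 * (x₁ + τ) * (y₁ + τ) - z₂ ^ 2)) < 2 * ((x₁ + τ) + (y₁ + τ)) := by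
      rw [Real.sqrt_lt' (by linarith)]
      nlinarith
    have hcount := ncard_biquadratic_roots _ _ (Real.sqrt_pos.2 hR) hlt
    rwa [Real.sq_sqrt hR.le] at hcount
  · intro hshadow
    rw [Set.image_eq_empty, Set.eq_empty_iff_forall_notMem]
    intro v hv
    rw [Set.mem_ofPred_eq] at hv
    nlinarith [sq_nonneg (v ^ 2 - 2 * ((x₁ + τ) + (y₁ + τ)))]
end

section
/- Let d = 2 and fix x₁, y₁, τ, z₂ ∈ ℝ. Let Φ(ξ₁, η₁, ξ₂) = x₁ξ₁ − y₁η₁ + z₂ξ₂ + (τ − ξ₂²/2)(ξ₁ − η₁) − (ξ₁³ − η₁³)/6. Then: (i) at every point of ℝ³, the determinant of the Hessian of Φ in the variables (ξ₁, η₁, ξ₂) equals (ξ₁ − η₁)(ξ₁η₁ + ξ₂²); (ii) at every critical point of Φ with ξ₁ ≠ η₁, one has (ξ₁η₁ + ξ₂²)² = 4(x₁ + τ)(y₁ + τ) − z₂², and hence (det Hess Φ)² = (ξ₁ − η₁)² (4(x₁ + τ)(y₁ + τ) − z₂²); in particular such critical points are nondegenerate whenever 4(x₁ + τ)(y₁ +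 τ) > z₂². -/
/-!
Everything reduces to the explicit gradient and Hessian of `Φ`. Writing `(a, b, c)` for
`(ξ₁, η₁, ξ₂)`, they are

* `∇Φ = (x₁ + τ - c²/2 - a²/2, -(y₁ + τ) + c²/2 + b²/2, z₂ - c (a - b))`,
* `Hess Φ = !![-a, 0, -c; 0, b, c; -c, c, -(a - b)]`, with determinant `(a - b)(ab + c²)`.

At a critical point `2(x₁ + τ) = a² + c²`, `2(y₁ + τ) = b² + c²` and `z₂ = c (a - b)`, so the
second claim is the identity `(a² + c²)(b² + c²) - c²(a - b)² = (ab + c²)²`.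
-/

/-- Partial derivative in the first variable of a function of three real variables. -/
noncomputable def pderiv1 (f : ℝ → ℝ → ℝ → ℝ) : ℝ → ℝ → ℝ → ℝ :=
  fun a b c => deriv (fun u => f u b c) a

/-- Partial derivative in the second variable of a function of three real variables. -/
noncomputable def pderiv2 (f : ℝ → ℝ → ℝ → ℝ) : ℝ → ℝ → ℝ → ℝ :=
  fun a b c => deriv (fun v => f a v c) b

/-- Partial derivative in the third variable of a function of three real variables. -/
noncomputable def pderiv3 (f : ℝ → ℝ → ℝ → ℝ) : ℝ → ℝ → ℝ → ℝ :=
  fun a b c => deriv (fun w => f a b w) c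

/-- The Hessian matrix of a function of three real variables. -/
noncomputable def hessian3 (f : ℝ → ℝ → ℝ → ℝ) (a b c : ℝ) : Matrix (Fin 3) (Fin 3) ℝ :=
  !![pderiv1 (pderiv1 f) a b c, pderiv2 (pderiv1 f) a b c, pderiv3 (pderiv1 f) a b c;
     pderiv1 (pderiv2 f) a b c, pderiv2 (pderiv2 f) a b c, pderiv3 (pderiv2 f) a b c;
     pderiv1 (pderiv3 f) a b c, pderiv2 (pderiv3 f) a b c, pderiv3 (pderiv3 f) a b c]

theorem pderiv1_eq {f g : ℝ → ℝ → ℝ → ℝ}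
    (h : ∀ a b c, HasDerivAt (fun u => f u b c) (g a b c) a) : pderiv1 f = g := by
  funext a b c
  exact (h a b c).deriv

theorem pderiv2_eq {f g : ℝ → ℝ → ℝ → ℝ}
    (h : ∀ a b c, HasDerivAt (fun v => f a v c) (g a b c) b) : pderiv2 f = g := by
  funext a b c
  exact (h a b c).deriv

theorem pderiv3_eq {f g : ℝ → ℝ → ℝ → ℝ}
    (h : ∀ a b c, HasDerivAt (fun w => f a b w) (g a b c) c) : pderiv3 f = g := by
  funext a b c
  exact (h a b c).deriv

/-- A function `f` that equals the cubic polynomial `p + q u + r u² + s u³` has the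
expected derivative; every one-variable slice of `Φ` and of its gradient has this form. -/
theorem hasDerivAt_of_eq_cubic {f : ℝ → ℝ} (p q r s : ℝ) {d a : ℝ}
    (hf : ∀ u, f u = p + q * u + r * u ^ 2 + s * u ^ 3)
    (hd : d = q + 2 * r * a + 3 * s * a ^ 2) : HasDerivAt f d a := by
  have h := ((((hasDerivAt_id' a).const_mul q).const_add p).add
    ((hasDerivAt_pow 2 a).const_mul r)).add ((hasDerivAt_pow 3 a).const_mul s)
  refine (h.congr_deriv ?_).congr_of_eventuallyEq (.of_forall fun u => ?_)
  · rw [hd]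
    push_cast
    ring
  · exact hf u

/-- Hessian identities for the phase function (2.9) in `d = 2`:
(i) `det Hess Φ = (ξ₁ − η₁)(ξ₁η₁ + ξ₂²)` everywhere;
(ii) at every critical point of `Φ` with `ξ₁ ≠ η₁`,
`(ξ₁η₁ + ξ₂²)² = 4(x₁+τ)(y₁+τ) − z₂²`, hence
`(det Hess Φ)² = (ξ₁ − η₁)²(4(x₁+τ)(y₁+τ) − z₂²)`; in particular such critical points
are nondegenerate whenever `4(x₁+τ)(y₁+τ) > z₂²`. -/
theorem toy_model_phase_hessian (x₁ y₁ τ z₂ : ℝ) (Φ : ℝ → ℝ → ℝ → ℝ)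
    (hΦ : Φ = fun ξ₁ η₁ ξ₂ => x₁ * ξ₁ - y₁ * η₁ + z₂ * ξ₂
      + (τ - ξ₂ ^ 2 / 2) * (ξ₁ - η₁) - (ξ₁ ^ 3 - η₁ ^ 3) / 6) :
    (∀ ξ₁ η₁ ξ₂ : ℝ,
      (hessian3 Φ ξ₁ η₁ ξ₂).det = (ξ₁ - η₁) * (ξ₁ * η₁ + ξ₂ ^ 2)) ∧
    (∀ ξ₁ η₁ ξ₂ : ℝ, pderiv1 Φ ξ₁ η₁ ξ₂ = 0 → pderiv2 Φ ξ₁ η₁ ξ₂ = 0 →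
      pderiv3 Φ ξ₁ η₁ ξ₂ = 0 → ξ₁ ≠ η₁ →
      (ξ₁ * η₁ + ξ₂ ^ 2) ^ 2 = 4 * (x₁ + τ) * (y₁ + τ) - z₂ ^ 2 ∧
      ((hessian3 Φ ξ₁ η₁ ξ₂).det) ^ 2
        = (ξ₁ - η₁) ^ 2 * (4 * (x₁ + τ) * (y₁ + τ) - z₂ ^ 2) ∧
      (4 * (x₁ + τ) * (y₁ + τ) > z₂ ^ 2 → (hessian3 Φ ξ₁ η₁ ξ₂).det ≠ 0)) := by
  have h1 : pderiv1 Φ = fun a _ c => x₁ + τ - c ^ 2 / 2 - a ^ 2 / 2 :=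
    pderiv1_eq fun a b c => hasDerivAt_of_eq_cubic
      (-y₁ * b + z₂ * c - (τ - c ^ 2 / 2) * b + b ^ 3 / 6) (x₁ + (τ - c ^ 2 / 2)) 0 (-1 / 6)
      (fun u => by simp only [hΦ]; ring) (by ring)
  have h2 : pderiv2 Φ = fun _ b c => -(y₁ + τ) + c ^ 2 / 2 + b ^ 2 / 2 :=
    pderiv2_eq fun a b c => hasDerivAt_of_eq_cubic
      (x₁ * a + z₂ * c + (τ - c ^ 2 / 2) * a - a ^ 3 / 6) (-y₁ - (τ - c ^ 2 / 2)) 0 (1 / 6)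
      (fun u => by simp only [hΦ]; ring) (by ring)
  have h3 : pderiv3 Φ = fun a b c => z₂ - c * (a - b) :=
    pderiv3_eq fun a b c => hasDerivAt_of_eq_cubic
      (x₁ * a - y₁ * b + τ * (a - b) - (a ^ 3 - b ^ 3) / 6) z₂ (-(a - b) / 2) 0
      (fun u => by simp only [hΦ]; ring) (by ring)
  have hH : ∀ a b c, hessian3 Φ a b c = !![-a, 0, -c; 0, b, c; -c, c, -(a - b)] := by
    intro a b c
    rw [hessian3, h1, h2, h3,
      pderiv1_eq (g := fun a _ _ => -a) fun a b c => hasDerivAt_of_eq_cubic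
        (x₁ + τ - c ^ 2 / 2) 0 (-1 / 2) 0 (fun u => by ring) (by ring),
      pderiv2_eq (g := fun _ _ _ => 0) fun a b c => hasDerivAt_of_eq_cubic
        (x₁ + τ - c ^ 2 / 2 - a ^ 2 / 2) 0 0 0 (fun u => by ring) (by ring),
      pderiv3_eq (g := fun _ _ c => -c) fun a b c => hasDerivAt_of_eq_cubic
        (x₁ + τ - a ^ 2 / 2) 0 (-1 / 2) 0 (fun u => by ring) (by ring),
      pderiv1_eq (g := fun _ _ _ => 0) fun a b c => hasDerivAt_of_eq_cubic
        (-(y₁ + τ) + c ^ 2 / 2 + b ^ 2 / 2) 0 0 0 (fun u => by ring) (by ring),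
      pderiv2_eq (g := fun _ b _ => b) fun a b c => hasDerivAt_of_eq_cubic
        (-(y₁ + τ) + c ^ 2 / 2) 0 (1 / 2) 0 (fun u => by ring) (by ring),
      pderiv3_eq (g := fun _ _ c => c) fun a b c => hasDerivAt_of_eq_cubic
        (-(y₁ + τ) + b ^ 2 / 2) 0 (1 / 2) 0 (fun u => by ring) (by ring),
      pderiv1_eq (g := fun _ _ c => -c) fun a b c => hasDerivAt_of_eq_cubic
        (z₂ + c * b) (-c) 0 0 (fun u => by ring) (by ring),
      pderiv2_eq (g := fun _ _ c => c) fun a b c => hasDerivAt_of_eq_cubic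
        (z₂ - c * a) c 0 0 (fun u => by ring) (by ring),
      pderiv3_eq (g := fun a b _ => -(a - b)) fun a b c => hasDerivAt_of_eq_cubic
        z₂ (-(a - b)) 0 0 (fun u => by ring) (by ring)]
  have hdet : ∀ a b c, (hessian3 Φ a b c).det = (a - b) * (a * b + c ^ 2) := by
    intro a b c
    rw [hH, Matrix.det_fin_three]
    simp
    ring
  refine ⟨hdet, fun a b c e1 e2 e3 hab => ?_⟩
  simp only [h1, h2, h3] at e1 e2 e3
  have hx : x₁ + τ = (a ^ 2 + c ^ 2) / 2 := by linarith
  have hy : y₁ + τ = (b ^ 2 + c ^ 2) / 2 := by linarith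
  have hz : z₂ = c * (a - b) := by linarith
  have key : (a * b + c ^ 2) ^ 2 = 4 * (x₁ + τ) * (y₁ + τ) - z₂ ^ 2 := by
    rw [hx, hy, hz]
    ring
  refine ⟨key, by rw [hdet, mul_pow, key], fun hpos => ?_⟩
  rw [hdet]
  refine mul_ne_zero (sub_ne_zero.2 hab) fun h0 => ?_
  rw [h0] at key
  linarith
end

section
/- For every ε > 0 there is a constant C such that the following holds. Let h > 0 and x = (x₁, x₂), y = (y₁, y₂) ∈ ℝ² with x₁ ≥ 0, y₁ ≥ 0, and set ℓ = max(|x − y|, x₁, y₁, h^{2/3}). If |x − y| ≥ ε ℓ, then | (2πh)^{−2} ∫_{{ξ ∈ ℝ² : |ξ|² < x₁ + y₁}} exp(i h^{−1} ⟨x − y, ξ⟩) dξ | ≤ C h^{−1/2} ℓ^{−5/4}. -/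
open scoped RealInnerProductSpace

/-!
The integral over the disk `|ξ|² < S`, `S = x₁ + y₁ = R²`, is a Bessel function in disguise:
with `k = |x - y| / h` it equals `2 ∫_{-R}^{R} √(R² - t²) e^{ikt} dt` (`integral_disk_eq`), by
rotating `x - y` onto the first axis and using Fubini. This one-dimensional integral is
`O(R^{1/2} k^{-3/2})` (`norm_integral_semicircle_le`): it is trivially `O(R²)` when `kR ≤ 1`; when
`kR > 1`, the two end intervals of length `1 / k` are estimated by absolute values, and on the rest
two integrations by parts are allowed, where concavity of `√(R² - t²)`
bounds the last integral by the increment of its first derivative. Since `R ≤ √(2ℓ)` and `k ≥ εℓ / h`, the Weyl expression is at most a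
constant times `h⁻² ℓ^{1/4} (h / ℓ)^{3/2} = h^{-1/2} ℓ^{-5/4}`.
-/

/-- The half-disk weight `√(R² - t²)` has a square-root singularity at `± R`, which gives its Fourier
transform the decay `R^{1/2} k^{-3/2} = √(R / k) / k`. -/
theorem norm_integral_semicircle_le (R k : ℝ) (hR : 0 ≤ R) (hk : 0 < k) :
    ‖∫ t in (-R)..R, ((√(R^2 - t^2) : ℝ) : ℂ) * Complex.exp (Complex.I * ((k * t : ℝ) : ℂ))‖
      ≤ 12 * √(R * k⁻¹) * k⁻¹ := by
  have hexp : ∀ t : ℝ, ‖Complex.exp (Complex.I * ((k * t : ℝ) : ℂ))‖ = 1 := fun t => by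
    rw [mul_comm, Complex.norm_exp_ofReal_mul_I]
  set f : ℝ → ℂ := fun t => ((√(R^2 - t^2) : ℝ) : ℂ) * Complex.exp (Complex.I * ((k * t : ℝ) : ℂ)) with hf
  have hfc : Continuous f := by fun_prop
  have hfn : ∀ t, ‖f t‖ = √(R^2 - t^2) := fun t => by
    rw [hf]; simp only [norm_mul, hexp, Complex.norm_real, mul_one, Real.norm_eq_abs]
    exact abs_of_nonneg (Real.sqrt_nonneg _)
  obtain ⟨δ, hδ⟩ : ∃ δ, δ = k⁻¹ := ⟨_, rfl⟩
  have hδ0 : 0 < δ := by rw [hδ]; positivity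
  rw [← hδ]
  set s := √(R * δ) with hs
  have hs0 : 0 ≤ s := Real.sqrt_nonneg _
  have hs2 : s ^ 2 = R * δ := Real.sq_sqrt (by positivity)
  -- `δ = 1 / k` is the length of the end intervals; the bound reads `12 s δ`.
  rcases le_or_gt R δ with hRδ | hRδ
  · have h1 : ‖∫ t in (-R)..R, f t‖ ≤ R * |R - (-R)| := by
      apply intervalIntegral.norm_integral_le_of_norm_le_const
      intro t _
      rw [hfn]
      exact Real.sqrt_le_iff.mpr ⟨hR, by nlinarith [sq_nonneg t]⟩
    have h2 : R ≤ s := Real.le_sqrt_of_sq_le (by nlinarith)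
    rw [abs_of_nonneg (by linarith)] at h1
    nlinarith [mul_le_mul h2 hRδ hR hs0]
  · obtain ⟨a, ha⟩ : ∃ a, a = R - δ := ⟨_, rfl⟩
    have ha0 : 0 < a := by linarith
    have hR0 : 0 < R := by linarith
    have hsp : 0 < s := Real.sqrt_pos.mpr (by positivity)
    have hend : ∀ t, a ≤ |t| → √(R^2 - t^2) ≤ 2 * s := fun t ht => by
      apply Real.sqrt_le_iff.mpr ⟨by positivity, ?_⟩
      rw [← sq_abs t]
      nlinarith
    have hlo : s ≤ √(R^2 - a^2) := Real.sqrt_le_sqrt (by subst ha; nlinarith)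
    have e1 : ‖∫ t in (-R)..(-a), f t‖ ≤ 2 * s * |(-a) - (-R)| := by
      apply intervalIntegral.norm_integral_le_of_norm_le_const
      intro t ht
      rw [Set.uIoc_of_le (by linarith)] at ht
      rw [hfn]; exact hend t (by rw [abs_of_neg (by linarith [ht.2])]; linarith [ht.2])
    have e2 : ‖∫ t in a..R, f t‖ ≤ 2 * s * |R - a| := by
      apply intervalIntegral.norm_integral_le_of_norm_le_const
      intro t ht
      rw [Set.uIoc_of_le (by linarith)] at ht
      rw [hfn]; exact hend t (by rw [abs_of_pos (by linarith [ht.1])]; linarith [ht.1])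
    rw [show (-a) - (-R) = δ by linarith, abs_of_pos hδ0] at e1
    rw [show R - a = δ by linarith, abs_of_pos hδ0] at e2
    -- On `[-a, a]` the weight `F` is smooth, with first derivative `F1`, second derivative `-F2 ≤ 0`.
    set E : ℝ → ℂ := fun t => Complex.exp (Complex.I * ((k * t : ℝ) : ℂ)) with hE
    set F : ℝ → ℝ := fun t => √(R^2 - t^2) with hF
    set F1 : ℝ → ℝ := fun t => - t / √(R^2 - t^2) with hF1
    set F2 : ℝ → ℝ := fun t => R^2 / (√(R^2 - t^2)) ^ 3 with hF2
    have hin : ∀ t ∈ Set.uIcc (-a) a, 0 < R^2 - t^2 := fun t ht => by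
      rw [Set.uIcc_of_le (by linarith)] at ht
      nlinarith [ht.1, ht.2]
    have dF : ∀ t ∈ Set.uIcc (-a) a, HasDerivAt F (F1 t) t := fun t ht => by
      refine (((hasDerivAt_pow 2 t).const_sub (R^2)).sqrt (hin t ht).ne').congr_deriv ?_
      have hp := Real.sqrt_pos.mpr (hin t ht)
      simp only [hF1]
      field_simp
      ring
    have dF1 : ∀ t ∈ Set.uIcc (-a) a, HasDerivAt F1 (-F2 t) t := fun t ht => by
      have hp := Real.sqrt_pos.mpr (hin t ht)
      have h := (hasDerivAt_id t).neg.div (dF t ht) hp.ne'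
      refine h.congr_deriv ?_
      have h3 : F t ^ 2 = R^2 - t^2 := Real.sq_sqrt (hin t ht).le
      have h4 : F t ≠ 0 := hp.ne'
      change (-1 * F t - -t * (-t / F t)) / F t ^ 2 = -(R^2 / F t ^ 3)
      field_simp
      linear_combination -h3
    have dE : ∀ t, HasDerivAt E (E t * (Complex.I * k)) t := fun t => by
      have h := (((hasDerivAt_id t).const_mul k).ofReal_comp.const_mul Complex.I).cexp
      simpa [hE] using h
    have cF2 : ContinuousOn F2 (Set.uIcc (-a) a) := by
      apply ContinuousOn.div (by fun_prop) (by fun_prop)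
      intro t ht
      exact pow_ne_zero _ (Real.sqrt_pos.mpr (hin t ht)).ne'
    have cE : Continuous E := by fun_prop
    have hkδ : (k : ℂ) * δ = 1 := by rw [hδ, ← Complex.ofReal_mul, mul_inv_cancel₀ hk.ne', Complex.ofReal_one]
    -- The two boundary terms of the double integration by parts, collected into one primitive.
    set G : ℝ → ℂ := fun t => -Complex.I * δ * (F t * E t) + δ^2 * (F1 t * E t) with hG
    have dG : ∀ t ∈ Set.uIcc (-a) a, HasDerivAt G (f t - δ^2 * (F2 t * E t)) t := fun t ht => by
      have h1 := ((dF t ht).ofReal_comp.mul (dE t)).const_mul (-Complex.I * δ)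
      have h2 := ((dF1 t ht).ofReal_comp.mul (dE t)).const_mul ((δ:ℂ)^2)
      refine (h1.add h2).congr_deriv ?_
      change _ = (F t : ℂ) * E t - δ^2 * (F2 t * E t)
      push_cast
      linear_combination ((F t : ℂ) * E t + δ * F1 t * E t * Complex.I) * hkδ
        - (F t : ℂ) * E t * k * δ * Complex.I_sq
    have ci : IntervalIntegrable (fun t => (δ:ℂ)^2 * (F2 t * E t)) MeasureTheory.volume (-a) a := by
      apply ContinuousOn.intervalIntegrable
      exact continuousOn_const.mul ((Complex.continuous_ofReal.comp_continuousOn cF2).mul cE.continuousOn)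
    have ftc := intervalIntegral.integral_eq_sub_of_hasDerivAt dG
      ((hfc.intervalIntegrable _ _).sub ci)
    have ftc2 := intervalIntegral.integral_eq_sub_of_hasDerivAt dF1 cF2.neg.intervalIntegrable
    rw [intervalIntegral.integral_sub (hfc.intervalIntegrable _ _) ci] at ftc
    -- `F2 ≥ 0`, so the remaining integral is controlled by the increment of `F1`.
    have hF2b : ‖∫ t in (-a)..a, (δ:ℂ)^2 * (F2 t * E t)‖ ≤ ∫ t in (-a)..a, δ^2 * F2 t := by
      apply intervalIntegral.norm_integral_le_of_norm_le (by linarith)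
      · filter_upwards with t ht
        have : 0 ≤ F2 t := by rw [hF2]; positivity
        rw [norm_mul, norm_mul, hexp, Complex.norm_real, Real.norm_of_nonneg this, norm_pow,
          Complex.norm_real, Real.norm_of_nonneg hδ0.le, mul_one]
      · exact (continuousOn_const.mul cF2).intervalIntegrable
    rw [intervalIntegral.integral_neg] at ftc2
    rw [intervalIntegral.integral_const_mul (δ^2)] at hF2b
    have hFa : F a ≤ 2 * s := hend a (le_abs_self a)
    have hFe : F (-a) = F a := by simp [hF]
    have hF1a : |F1 a| * δ ≤ s := by
      have hp : 0 < √(R^2 - a^2) := by linarith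
      rw [hF1]
      simp only
      rw [abs_div, abs_neg, abs_of_pos ha0, abs_of_pos hp, div_mul_eq_mul_div, div_le_iff₀ hp]
      nlinarith
    have hF1e : F1 (-a) = - F1 a := by simp [hF1, neg_div]
    have hGb : ∀ t, |F t| ≤ 2 * s → |F1 t| * δ ≤ s → ‖G t‖ ≤ 3 * s * δ := fun t h1 h2 => by
      have : ‖G t‖ ≤ δ * |F t| + δ^2 * |F1 t| := by
        refine (norm_add_le _ _).trans (le_of_eq ?_)
        simp only [norm_mul, hexp, norm_neg, Complex.norm_I, Complex.norm_real, norm_pow,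
          Real.norm_eq_abs, abs_of_pos hδ0, E]
        ring
      nlinarith
    have hFabs : |F a| ≤ 2 * s := by rwa [abs_of_nonneg (Real.sqrt_nonneg _)]
    have g1 := hGb a hFabs hF1a
    have g2 := hGb (-a) (by rwa [hFe]) (by rwa [hF1e, abs_neg])
    have hmid : ‖∫ t in (-a)..a, f t‖ ≤ 8 * s * δ := by
      have e : ∫ t in (-a)..a, f t = G a - G (-a) + ∫ t in (-a)..a, (δ:ℂ)^2 * (F2 t * E t) := by
        linear_combination ftc
      rw [e]
      refine (norm_add_le _ _).trans ?_
      have := norm_sub_le (G a) (G (-a))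
      have h5 : δ^2 * ∫ t in (-a)..a, F2 t ≤ 2 * s * δ := by
        have : ∫ t in (-a)..a, F2 t ≤ 2 * |F1 a| := by
          rw [hF1e] at ftc2
          linarith [neg_abs_le (F1 a)]
        nlinarith
      linarith
    have i := fun u v => hfc.intervalIntegrable (μ := MeasureTheory.volume) u v
    rw [← intervalIntegral.integral_add_adjacent_intervals (i (-R) (-a)) (i (-a) R),
      ← intervalIntegral.integral_add_adjacent_intervals (i (-a) a) (i a R)]
    refine (norm_add_le _ _).trans ?_
    have := norm_add_le (∫ t in (-a)..a, f t) (∫ t in a..R, f t)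
    linarith

open MeasureTheory in
/-- The Fourier integral over a disk is rotation invariant, so it reduces to the frequency pointing
along the first axis; integrating out the second variable leaves the chord length
`2 √(S - t²)` as weight. -/
theorem integral_disk_eq (u : EuclideanSpace ℝ (Fin 2)) (hu : u ≠ 0) (c S : ℝ) (hS : 0 ≤ S) :
    ∫ ξ in {ξ : EuclideanSpace ℝ (Fin 2) | ‖ξ‖ ^ 2 < S},
        Complex.exp (Complex.I * ((c * ⟪u, ξ⟫ : ℝ) : ℂ)) =
      2 * ∫ t in (-√S)..√S, ((√((√S)^2 - t^2) : ℝ) : ℂ) *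
        Complex.exp (Complex.I * ((c * ‖u‖ * t : ℝ) : ℂ)) := by
  have hn : ‖u‖ ≠ 0 := norm_ne_zero_iff.mpr hu
  obtain ⟨b, hb⟩ : ∃ b : OrthonormalBasis (Fin 2) ℝ (EuclideanSpace ℝ (Fin 2)),
      b 0 = ‖u‖⁻¹ • u := by
    obtain ⟨b, hb⟩ := Orthonormal.exists_orthonormalBasis_extension_of_card_eq (𝕜 := ℝ)
      (E := EuclideanSpace ℝ (Fin 2)) (ι := Fin 2) (by simp)
      (v := fun _ => ‖u‖⁻¹ • u) (s := {0}) (by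
        refine ⟨fun i => ?_, fun i j hij => absurd (Subsingleton.elim i j) hij⟩
        simp [norm_smul, hn])
    exact ⟨b, hb 0 rfl⟩
  -- Coordinates of a vector in the basis `b`, as a measure-preserving map onto `ℝ × ℝ`.
  let e : EuclideanSpace ℝ (Fin 2) ≃ᵐ ℝ × ℝ :=
    (b.measurableEquiv).trans ((MeasurableEquiv.toLp 2 (Fin 2 → ℝ)).symm.trans
      MeasurableEquiv.finTwoArrow)
  have he : MeasurePreserving e :=
    (volume_preserving_finTwoArrow ℝ).comp
      ((PiLp.volume_preserving_ofLp (Fin 2)).comp b.measurePreserving_measurableEquiv)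
  have e1 : ∀ ξ, (e ξ).1 = ⟪b 0, ξ⟫ := fun ξ => b.repr_apply_apply ξ 0
  have e2 : ∀ ξ, (e ξ).2 = ⟪b 1, ξ⟫ := fun ξ => b.repr_apply_apply ξ 1
  have hin : ∀ ξ, ⟪u, ξ⟫ = ‖u‖ * (e ξ).1 := fun ξ => by
    rw [e1, hb, real_inner_smul_left]; field_simp
  have hnorm : ∀ ξ, ‖ξ‖ ^ 2 = (e ξ).1 ^ 2 + (e ξ).2 ^ 2 := fun ξ => by
    rw [e1, e2, ← b.sum_sq_inner_right ξ, Fin.sum_univ_two]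
  set g : ℝ → ℂ := fun t => Complex.exp (Complex.I * ((c * ‖u‖ * t : ℝ) : ℂ)) with hg
  have hgc : Continuous g := by fun_prop
  have hgn : ∀ t, ‖g t‖ = 1 := fun t => by
    rw [hg]; simp only; rw [mul_comm, Complex.norm_exp_ofReal_mul_I]
  set D : Set (ℝ × ℝ) := {p | p.1 ^ 2 + p.2 ^ 2 < S} with hD
  have hDm : MeasurableSet D := measurableSet_lt (by fun_prop) (by fun_prop)
  have hpre : {ξ : EuclideanSpace ℝ (Fin 2) | ‖ξ‖ ^ 2 < S} = e ⁻¹' D := by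
    ext ξ; simp only [Set.mem_ofPred_eq, Set.mem_preimage, hD, hnorm]
  have hDfin : volume D < ⊤ := by
    have : D ⊆ Metric.closedBall 0 (√S) := by
      rintro ⟨p, q⟩ h
      simp only [hD, Set.mem_ofPred_eq] at h
      rw [mem_closedBall_zero_iff, Prod.norm_def]
      exact max_le (Real.abs_le_sqrt (by nlinarith)) (Real.abs_le_sqrt (by nlinarith))
    exact (measure_mono this).trans_lt measure_closedBall_lt_top
  have step1 : ∫ ξ in {ξ : EuclideanSpace ℝ (Fin 2) | ‖ξ‖ ^ 2 < S},
        Complex.exp (Complex.I * ((c * ⟪u, ξ⟫ : ℝ) : ℂ)) = ∫ p in D, g p.1 := by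
    rw [hpre, ← he.setIntegral_preimage_emb e.measurableEmbedding]
    simp only [hin, hg, mul_assoc]
  rw [step1, ← integral_indicator hDm]
  have hint : Integrable (D.indicator fun p : ℝ × ℝ => g p.1) (volume.prod volume) := by
    rw [integrable_indicator_iff hDm]
    apply Measure.integrableOn_of_bounded (M := 1) hDfin.ne
      (by fun_prop)
    exact Filter.Eventually.of_forall fun p => (hgn _).le
  rw [Measure.volume_eq_prod, integral_prod _ hint]
  -- For `|t| > √S` both sides vanish, as `√` of a negative number is `0`.
  have inner : ∀ t : ℝ, ∫ q : ℝ, D.indicator (fun p : ℝ × ℝ => g p.1) (t, q)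
      = 2 * ((√(S - t^2) : ℝ) : ℂ) * g t := fun t => by
    have : (fun q : ℝ => D.indicator (fun p : ℝ × ℝ => g p.1) (t, q)) =
        (Set.Ioo (-√(S - t^2)) (√(S - t^2))).indicator fun _ => g t := by
      ext q
      have : (t, q) ∈ D ↔ q ∈ Set.Ioo (-√(S - t^2)) (√(S - t^2)) := by
        rw [Set.mem_Ioo, ← Real.sq_lt]
        simp only [hD, Set.mem_ofPred_eq]
        constructor <;> intro h <;> linarith
      by_cases h : (t, q) ∈ D
      · rw [Set.indicator_of_mem h, Set.indicator_of_mem (this.1 h)]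
      · rw [Set.indicator_of_notMem h, Set.indicator_of_notMem (mt this.2 h)]
    rw [this, integral_indicator measurableSet_Ioo, setIntegral_const, Measure.real,
      Real.volume_Ioo, ENNReal.toReal_ofReal (by linarith [Real.sqrt_nonneg (S - t^2)])]
    rw [Complex.real_smul]; push_cast; ring
  simp only [inner, Real.sq_sqrt hS]
  rw [intervalIntegral.integral_of_le (by linarith [Real.sqrt_nonneg S]),
    setIntegral_eq_integral_of_forall_compl_eq_zero, ← integral_const_mul]
  · simp only [mul_assoc, hg]
  · intro t ht
    have : S ≤ t ^ 2 := by
      by_contra! h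
      have := Real.sq_lt.1 h
      exact ht ⟨this.1, this.2.le⟩
    rw [Real.sqrt_eq_zero_of_nonpos (by linarith)]; simp

/-- Estimate (2.30): for the toy-model operator `½h²D² − x₁` in `d = 2` at energy `0`,
with `ℓ = max(|x − y|, x₁, y₁, h^{2/3})`, if `|x − y| ≥ εℓ` then the Weyl expression
`e^W_h(x,y,0) = (2πh)⁻² ∫_{|ξ|² < x₁ + y₁} e^{ih⁻¹⟨x−y,ξ⟩} dξ` satisfies
`|e^W_h(x,y,0)| ≤ C h^{−1/2} ℓ^{−5/4}`. -/
theorem toy_model_weyl_bound :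
    ∀ ε : ℝ, 0 < ε → ∃ C : ℝ, ∀ h : ℝ, 0 < h →
      ∀ x y : EuclideanSpace ℝ (Fin 2), 0 ≤ x 0 → 0 ≤ y 0 →
        ∀ ℓ : ℝ, ℓ = max (max (max ‖x - y‖ (x 0)) (y 0)) (h ^ ((2 : ℝ) / 3)) →
          ε * ℓ ≤ ‖x - y‖ →
          ‖(1 / (2 * Real.pi * h) ^ 2 : ℂ) *
              ∫ ξ in {ξ : EuclideanSpace ℝ (Fin 2) | ‖ξ‖ ^ 2 < x 0 + y 0},
                Complex.exp (Complex.I * ((h⁻¹ * ⟪x - y, ξ⟫ : ℝ) : ℂ))‖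
            ≤ C * h ^ (-(1 / 2) : ℝ) * ℓ ^ (-(5 / 4) : ℝ) := by
  intro ε hε
  -- Writing `ε = η²`, `h = H²`, `ℓ = L⁴` turns every fractional power into an integer one.
  obtain ⟨η, hη, rfl⟩ : ∃ η : ℝ, 0 < η ∧ η ^ 2 = ε :=
    ⟨√ε, Real.sqrt_pos.mpr hε, Real.sq_sqrt hε.le⟩
  refine ⟨48 / η ^ 3, fun h hh x y hx hy ℓ hℓ hr => ?_⟩
  have hxl : x 0 ≤ ℓ := by rw [hℓ]; simp
  have hyl : y 0 ≤ ℓ := by rw [hℓ]; simp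
  have hl : 0 < ℓ := by
    rw [hℓ]; exact lt_max_of_lt_right (Real.rpow_pos_of_pos hh _)
  clear hℓ
  have hr0 : 0 < ‖x - y‖ := lt_of_lt_of_le (by positivity) hr
  rw [integral_disk_eq (x - y) (norm_pos_iff.mp hr0) h⁻¹ (x 0 + y 0) (by linarith)]
  have hosc := norm_integral_semicircle_le (√(x 0 + y 0)) (h⁻¹ * ‖x - y‖) (Real.sqrt_nonneg _) (by positivity)
  obtain ⟨H, hH, rfl⟩ : ∃ H : ℝ, 0 < H ∧ H ^ 2 = h :=
    ⟨√h, Real.sqrt_pos.mpr hh, Real.sq_sqrt hh.le⟩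
  obtain ⟨L, hL, rfl⟩ : ∃ L : ℝ, 0 < L ∧ L ^ 4 = ℓ :=
    ⟨√√ℓ, by positivity, by
      rw [show 4 = 2 * 2 from rfl, pow_mul, Real.sq_sqrt (by positivity), Real.sq_sqrt hl.le]⟩
  have pH : (H ^ 2) ^ (-(1 / 2) : ℝ) = H⁻¹ := by
    rw [← Real.rpow_natCast, ← Real.rpow_mul hH.le, ← Real.rpow_neg_one]; norm_num
  have pL : (L ^ 4) ^ (-(5 / 4) : ℝ) = (L ^ 5)⁻¹ := by
    rw [← Real.rpow_natCast, ← Real.rpow_mul hL.le, ← Real.rpow_natCast, ← Real.rpow_neg hL.le]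
    norm_num
  rw [pH, pL]
  have hδ : ((H ^ 2)⁻¹ * ‖x - y‖)⁻¹ ≤ H ^ 2 / (η ^ 2 * L ^ 4) := by
    rw [mul_inv, inv_inv, ← div_eq_mul_inv]
    gcongr
  have hR : √(x 0 + y 0) ≤ 2 * L ^ 2 := by
    apply Real.sqrt_le_iff.mpr ⟨by positivity, by nlinarith⟩
  have hs : √(√(x 0 + y 0) * ((H ^ 2)⁻¹ * ‖x - y‖)⁻¹) ≤ 2 * H / (η * L) := by
    apply Real.sqrt_le_iff.mpr ⟨by positivity, ?_⟩
    calc √(x 0 + y 0) * ((H ^ 2)⁻¹ * ‖x - y‖)⁻¹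
        ≤ (2 * L ^ 2) * (H ^ 2 / (η ^ 2 * L ^ 4)) := by gcongr
      _ = 2 * (H / (η * L)) ^ 2 := by field_simp
      _ ≤ 4 * (H / (η * L)) ^ 2 := by gcongr; norm_num
      _ = _ := by ring
  have hpre : ‖(1 / (2 * Real.pi * (H ^ 2 : ℝ)) ^ 2 : ℂ)‖ ≤ 1 / (H ^ 2) ^ 2 := by
    rw [norm_div, norm_one, norm_pow, norm_mul, norm_mul, Complex.norm_real, Complex.norm_real,
      Complex.norm_two, Real.norm_of_nonneg Real.pi_pos.le, Real.norm_of_nonneg (by positivity)]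
    gcongr
    nlinarith [Real.pi_gt_three, sq_nonneg H]
  rw [norm_mul, norm_mul, Complex.norm_two]
  calc _ ≤ 1 / (H ^ 2) ^ 2 * (2 * (12 * (2 * H / (η * L)) * (H ^ 2 / (η ^ 2 * L ^ 4)))) := by
        gcongr
        exact hosc.trans (by gcongr)
    _ = _ := by field_simp; norm_num
end

section
/- Let h > 0, y₁ ∈ ℝ, c ∈ ℝ, and τ ∈ ℂ with Im τ > 0. Define φ : ℝ → ℂ by φ(s) = h^{−1}((τ − c)s − s³/6) and W : ℝ → ℂ by W(ξ₁) = − e^{iφ(ξ₁)} ∫_{−∞}^{ξ₁} e^{−iφ(η) − i h^{−1} y₁ η} dη. Then the integral converges absolutely for every ξ₁ ∈ ℝ, W is differentiable, and W solves the transport equation (τ − ½ξ₁² − c) W(ξ₁) + i h W′(ξ₁) = − i h e^{− i h^{−1} y₁ ξ₁} for all ξ₁ ∈ ℝ. -/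
open MeasureTheory Complex

/-!
Since `Im φ(s) = h⁻¹ (Im τ) s` (the cubic term and the `c`-term are real for real `s`), the integrand
has modulus `e^{h⁻¹ (Im τ) η}`, which is integrable at `−∞` because `h > 0` and `Im τ > 0`.
The fundamental theorem of calculus and the product rule then give
`W' = iφ' W − e^{−ih⁻¹y₁ξ₁}` with `φ'(s) = h⁻¹(τ − c − s²/2)`; multiplying by `ih` is the
transport equation.
-/

/-- The fundamental theorem of calculus for a primitive vanishing at `−∞`. -/
theorem hasDerivAt_integral_Iic {f : ℝ → ℂ} (hf : Continuous f)
    (hi : ∀ x, IntegrableOn f (Set.Iic x)) (x : ℝ) :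
    HasDerivAt (fun x : ℝ => ∫ t in Set.Iic x, f t) (f x) x := by
  have h1 : (fun x : ℝ => ∫ t in Set.Iic x, f t)
      = fun x : ℝ => (∫ t in Set.Iic (0 : ℝ), f t) + ∫ t in (0 : ℝ)..x, f t := by
    funext x
    rw [← intervalIntegral.integral_Iic_sub_Iic (hi 0) (hi x)]
    ring
  rw [h1]
  exact (intervalIntegral.integral_hasDerivAt_right (hf.intervalIntegrable _ _)
    (hf.stronglyMeasurableAtFilter _ _) hf.continuousAt).const_add _

/-- The resolvent-side computation (2.4)–(2.5) for the toy-model operator `½h²D² − x₁`: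
with `φ(s) = h⁻¹((τ − c)s − s³/6)` and
`W(ξ₁) = −e^{iφ(ξ₁)} ∫_{−∞}^{ξ₁} e^{−iφ(η) − ih⁻¹y₁η} dη` (for `Im τ > 0`), the integral
converges absolutely, `W` is differentiable, and `W` solves
`(τ − ½ξ₁² − c)W(ξ₁) + ihW′(ξ₁) = −ih e^{−ih⁻¹y₁ξ₁}`. -/
theorem toy_model_transport_equation (h y₁ c : ℝ) (hh : 0 < h) (τ : ℂ) (hτ : 0 < τ.im)
    (φ : ℝ → ℂ)
    (hφ : φ = fun s : ℝ => (h⁻¹ : ℂ) * ((τ - (c : ℂ)) * (s : ℂ) - (s : ℂ) ^ 3 / 6))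
    (W : ℝ → ℂ)
    (hW : W = fun ξ₁ : ℝ => -Complex.exp (Complex.I * φ ξ₁) *
      ∫ η in Set.Iic ξ₁,
        Complex.exp (-(Complex.I * φ η) - Complex.I * ((h⁻¹ * y₁ * η : ℝ) : ℂ))) :
    (∀ ξ₁ : ℝ, IntegrableOn
        (fun η : ℝ =>
          Complex.exp (-(Complex.I * φ η) - Complex.I * ((h⁻¹ * y₁ * η : ℝ) : ℂ)))
        (Set.Iic ξ₁)) ∧
    (∀ ξ₁ : ℝ, DifferentiableAt ℝ W ξ₁) ∧
    (∀ ξ₁ : ℝ,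
      (τ - (ξ₁ : ℂ) ^ 2 / 2 - (c : ℂ)) * W ξ₁ + Complex.I * (h : ℂ) * deriv W ξ₁
        = -Complex.I * (h : ℂ) * Complex.exp (-Complex.I * ((h⁻¹ * y₁ * ξ₁ : ℝ) : ℂ))) := by
  have hφd : ∀ x : ℝ, HasDerivAt φ ((h⁻¹ : ℂ) * ((τ - c) - (x : ℂ) ^ 2 / 2)) x := by
    intro x
    rw [hφ]
    have hx : HasDerivAt (fun s : ℝ => (s : ℂ)) 1 x := Complex.ofRealCLM.hasDerivAt
    refine (((hx.const_mul (τ - (c : ℂ))).sub ((hx.pow 3).div_const 6)).const_mul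
      (h⁻¹ : ℂ)).congr_deriv ?_
    push_cast
    ring
  have hφc : Continuous φ := continuous_iff_continuousAt.2 fun x => (hφd x).continuousAt
  set f : ℝ → ℂ := fun η =>
    Complex.exp (-(Complex.I * φ η) - Complex.I * ((h⁻¹ * y₁ * η : ℝ) : ℂ)) with hf
  have hfc : Continuous f := by
    rw [hf]
    fun_prop
  have hnorm : ∀ η : ℝ, ‖f η‖ = Real.exp (h⁻¹ * τ.im * η) := by
    intro η
    have hcube : (τ - (c : ℂ)) * (η : ℂ) - (η : ℂ) ^ 3 / 6
        = τ * (η : ℂ) - ((c * η + η ^ 3 / 6 : ℝ) : ℂ) := by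
      push_cast
      ring
    rw [hf, Complex.norm_exp, hφ]
    simp only [hcube, ← Complex.ofReal_inv]
    simp [-Complex.ofReal_inv, -Complex.ofReal_add, -Complex.ofReal_mul]
    ring
  have hint : ∀ x : ℝ, IntegrableOn f (Set.Iic x) := by
    intro x
    refine (integrableOn_exp_mul_Iic (mul_pos (inv_pos.2 hh) hτ) x).mono'
      hfc.aestronglyMeasurable (.of_forall fun η => (hnorm η).le)
  have hWd : ∀ x : ℝ, HasDerivAt W
      (Complex.I * ((h⁻¹ : ℂ) * ((τ - c) - (x : ℂ) ^ 2 / 2)) * W x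
        - Complex.exp (-Complex.I * ((h⁻¹ * y₁ * x : ℝ) : ℂ))) x := by
    intro x
    -- The two phases `e^{iφ}` and `e^{-iφ}` cancel at the upper endpoint.
    have hcancel : Complex.exp (Complex.I * φ x) * f x
        = Complex.exp (-Complex.I * ((h⁻¹ * y₁ * x : ℝ) : ℂ)) := by
      rw [hf, ← Complex.exp_add]
      ring_nf
    rw [← hcancel, hW]
    refine (((hφd x).const_mul Complex.I).cexp.neg.mul
      (hasDerivAt_integral_Iic hfc hint x)).congr_deriv ?_
    simp only [Pi.neg_apply]
    ring
  refine ⟨hint, fun x => (hWd x).differentiableAt, fun x => ?_⟩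
  rw [(hWd x).deriv]
  have hne : (h : ℂ) ≠ 0 := by exact_mod_cast hh.ne'
  field_simp
  linear_combination (2 * (τ - (c : ℂ)) - (x : ℂ) ^ 2) * W x * Complex.I_sq
end
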